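/- Let (X,d) be a compact metric space, κ ≥ 1, and let f₁,…,f_κ : X → X be bijections such that every f_i and every f_i⁻¹ is Lipschitz continuous. Let ψ : X → ℝ be continuous. Assume: (a) the semigroup action generated by f₁,…,f_κ has frequent hitting times; (b) there exists 1 ≤ i ≤ κ such that ψ is not a coboundary with respect to f_i. Then there exist a point x ∈ X and a sequence ω ∈ Σ_κ := {1,…,κ}^ℕ such that liminf_{n→∞} (1/n) ∑_{j=0}^{n−1} ψ(f_ω^j(x)) < limsup_{n→∞} (1/n) ∑_{j=0}^{n−1} ψ(f_ω^j(x)); in particular the set of Birkhoff non-typical points of the semigroup action is non-empty. -/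

import Mathlib

open Filter Topology Metric MeasureTheory

noncomputable section

/-- Composition `f_{ω_{p-1}} ∘ ⋯ ∘ f_{ω₀}` along a finite word `w = (ω₀, …, ω_{p-1})`. -/
def wordComp {X : Type*} {κ : ℕ} (f : Fin κ → X → X) (w : List (Fin κ)) (x : X) : X :=
  w.foldl (fun y i => f i y) x

/-- Composition `f_ω^n = f_{ω_{n-1}} ∘ ⋯ ∘ f_{ω₀}` along an infinite word `ω ∈ {1,…,κ}^ℕ`. -/
def seqComp {X : Type*} {κ : ℕ} (f : Fin κ → X → X) (ω : ℕ → Fin κ) : ℕ → X → X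
  | 0 => id
  | n + 1 => f (ω n) ∘ seqComp f ω n

/-- The semigroup action generated by `f₁, …, f_κ` has *frequent hitting times*:
for every `ε > 0` there is `K(ε)` such that for all `x₁, x₂ ∈ X` and every radius
`0 < r ≤ ε/2` there are `p ≤ K(ε)`, a word `w` of length `p` and a point `z` with
`B(z, r/2) ⊆ f_w^p(B(x₁,ε)) ∩ B(x₂,r)`. -/
def FrequentHittingTimes {X : Type*} [MetricSpace X] {κ : ℕ} (f : Fin κ → X → X) : Prop :=
  ∀ ε : ℝ, 0 < ε → ∃ K : ℕ, ∀ x₁ x₂ : X, ∀ r : ℝ, 0 < r → r ≤ ε / 2 →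
    ∃ p ≤ K, ∃ w : List (Fin κ), w.length = p ∧ ∃ z : X,
      Metric.ball z (r / 2) ⊆ wordComp f w '' Metric.ball x₁ ε ∩ Metric.ball x₂ r

/-- `ψ` is not a coboundary with respect to `f`: there are two `f`-invariant Borel
probability measures giving `ψ` different space averages. -/
def NotCoboundary {X : Type*} [MeasurableSpace X] (f : X → X) (ψ : X → ℝ) : Prop :=
  ∃ μ₁ μ₂ : Measure X, IsProbabilityMeasure μ₁ ∧ IsProbabilityMeasure μ₂ ∧
    μ₁.map f = μ₁ ∧ μ₂.map f = μ₂ ∧ ∫ x, ψ x ∂μ₁ < ∫ x, ψ x ∂μ₂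


section Compositions

variable {X : Type*} {κ : ℕ}

lemma seqComp_congr (f : Fin κ → X → X) {ω ω' : ℕ → Fin κ} {n : ℕ}
    (h : ∀ j < n, ω j = ω' j) : seqComp f ω n = seqComp f ω' n := by
  induction n with
  | zero => rfl
  | succ n ih =>
    simp only [seqComp]
    rw [ih fun j hj => h j (hj.trans n.lt_succ_self), h n n.lt_succ_self]

lemma seqComp_add (f : Fin κ → X → X) (ω : ℕ → Fin κ) (m n : ℕ) (x : X) :
    seqComp f ω (m + n) x = seqComp f (fun j => ω (m + j)) n (seqComp f ω m x) := by
  induction n with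
  | zero => rfl
  | succ n ih =>
    rw [← add_assoc]
    simp only [seqComp, Function.comp_apply, ih]

lemma seqComp_const (f : Fin κ → X → X) (i : Fin κ) (n : ℕ) (x : X) :
    seqComp f (fun _ => i) n x = (f i)^[n] x := by
  induction n with
  | zero => rfl
  | succ n ih => simp only [seqComp, Function.comp_apply, ih, Function.iterate_succ_apply']

lemma seqComp_getD (f : Fin κ → X → X) (w : List (Fin κ)) (i : Fin κ) (x : X) :
    seqComp f (fun j => w.getD j i) w.length x = wordComp f w x := by
  induction w generalizing x with
  | nil => rfl
  | cons a w ih =>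
    rw [List.length_cons, add_comm, seqComp_add]
    simp only [add_comm 1, List.getD_cons_succ]
    rw [ih]
    rfl

lemma isOpenMap_seqComp [TopologicalSpace X] {f : Fin κ → X → X} (hf : ∀ i, IsOpenMap (f i))
    (ω : ℕ → Fin κ) (n : ℕ) : IsOpenMap (seqComp f ω n) := by
  induction n with
  | zero => exact IsOpenMap.id
  | succ n ih => exact (hf _).comp ih

lemma continuous_seqComp [TopologicalSpace X] {f : Fin κ → X → X} (hf : ∀ i, Continuous (f i))
    (n : ℕ) : Continuous fun q : X × (ℕ → Fin κ) => seqComp f q.2 n q.1 := by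
  induction n with
  | zero => exact continuous_fst
  | succ n ih =>
    have h : Continuous fun q : Fin κ × X => f q.1 q.2 :=
      continuous_prod_of_discrete_left.2 hf
    exact h.comp (((continuous_apply n).comp continuous_snd).prodMk ih)

end Compositions

/-- The Birkhoff sums of `ψ` along the orbit of `x` driven by `ω`. -/
def seqBirkhoffSum {X : Type*} {κ : ℕ} (f : Fin κ → X → X) (ψ : X → ℝ) (n : ℕ)
    (q : X × (ℕ → Fin κ)) : ℝ :=
  ∑ j ∈ Finset.range n, ψ (seqComp f q.2 j q.1)

lemma continuous_seqBirkhoffSum {X : Type*} [TopologicalSpace X] {κ : ℕ} {f : Fin κ → X → X}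
    (hf : ∀ i, Continuous (f i)) {ψ : X → ℝ} (hψ : Continuous ψ) (n : ℕ) :
    Continuous (seqBirkhoffSum f ψ n) :=
  continuous_finsetSum _ fun j _ => hψ.comp (continuous_seqComp hf j)

lemma abs_seqBirkhoffSum_le {X : Type*} {κ : ℕ} (f : Fin κ → X → X) {ψ : X → ℝ} {B : ℝ}
    (hB : ∀ x, |ψ x| ≤ B) (n : ℕ) (q : X × (ℕ → Fin κ)) :
    |seqBirkhoffSum f ψ n q| ≤ n * B := by
  refine (Finset.abs_sum_le_sum_abs _ _).trans ?_
  refine (Finset.sum_le_sum fun j _ => hB _).trans ?_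
  simp

/-- Some point has a Birkhoff sum not exceeding its mean with respect to an invariant
probability measure. -/
lemma exists_birkhoffSum_le_integral {X : Type*} [TopologicalSpace X] [CompactSpace X]
    [MeasurableSpace X] [BorelSpace X] {g : X → X} (hg : Continuous g) {ψ : X → ℝ}
    (hψ : Continuous ψ) (μ : Measure X) [IsProbabilityMeasure μ] (hμ : μ.map g = μ) (n : ℕ) :
    ∃ x, birkhoffSum g ψ n x ≤ n * ∫ y, ψ y ∂μ := by
  have hmp : MeasurePreserving g μ μ := ⟨hg.measurable, hμ⟩
  have hint (j : ℕ) : Integrable (fun x => ψ (g^[j] x)) μ :=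
    (hψ.comp (hg.iterate j)).integrable_of_hasCompactSupport (HasCompactSupport.of_compactSpace _)
  have hj (j : ℕ) : ∫ x, ψ (g^[j] x) ∂μ = ∫ y, ψ y ∂μ := by
    have h := (hmp.iterate j).map_eq
    conv_rhs => rw [← h]
    rw [integral_map (hmp.iterate j).measurable.aemeasurable hψ.aestronglyMeasurable]
  obtain ⟨x, hx⟩ := exists_le_integral
    (integrable_finsetSum (Finset.range n) fun j _ => hint j)
  refine ⟨x, ?_⟩
  rw [integral_finsetSum _ fun j _ => hint j] at hx
  simpa [hj, birkhoffSum] using hx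

/-- Pairs whose Birkhoff averages go below `c` at arbitrarily late times are dense, as soon as
some generator has an invariant probability measure whose mean is less than `c`. -/
lemma dense_seqBirkhoffSum_lt {X : Type*} [MetricSpace X] [CompactSpace X]
    [MeasurableSpace X] [BorelSpace X] {κ : ℕ} {f : Fin κ → X → X}
    (hf : ∀ i, Continuous (f i)) (hfo : ∀ i, IsOpenMap (f i)) (hfht : FrequentHittingTimes f)
    {ψ : X → ℝ} (hψ : Continuous ψ) (i : Fin κ) (μ : Measure X) [IsProbabilityMeasure μ]
    (hμ : μ.map (f i) = μ) {c : ℝ} (hc : ∫ x, ψ x ∂μ < c) (m : ℕ) :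
    Dense {q : X × (ℕ → Fin κ) | ∃ n > m, seqBirkhoffSum f ψ n q < n * c} := by
  obtain ⟨B, hB⟩ : ∃ B, ∀ x, |ψ x| ≤ B := by
    obtain ⟨B, hB⟩ := isCompact_univ.exists_bound_of_continuousOn hψ.continuousOn
    exact ⟨B, fun x => hB x trivial⟩
  rw [dense_iff_inter_open]
  rintro W hW ⟨⟨x, ω⟩, hxω⟩
  obtain ⟨U, V, hU, hV, hxU, hωV, hUV⟩ := isOpen_prod_iff.1 hW x ω hxω
  obtain ⟨N, hN⟩ : ∃ N, ∀ ω' : ℕ → Fin κ, (∀ j < N, ω' j = ω j) → ω' ∈ V := by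
    obtain ⟨I, u, hu, hIV⟩ := isOpen_pi_iff.1 hV ω hωV
    refine ⟨I.sup id + 1, fun ω' h => hIV fun j hj => ?_⟩
    rw [h j (Nat.lt_succ_of_le (Finset.le_sup (f := id) hj))]
    exact (hu j hj).2
  obtain ⟨ε, hε, hεU⟩ := Metric.isOpen_iff.1 (isOpenMap_seqComp hfo ω N U hU)
    (seqComp f ω N x) ⟨x, hxU, rfl⟩
  obtain ⟨K, hK⟩ := hfht ε hε
  obtain ⟨c', hc', hcc'⟩ := exists_between hc
  obtain ⟨n, hn⟩ := exists_nat_gt (max (m : ℝ) ((N + K) * (B + |c|) / (c - c')))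
  obtain ⟨hnm, hnK⟩ := max_lt_iff.1 hn
  rw [div_lt_iff₀ (sub_pos.2 hcc')] at hnK
  have hnm' : m < n := by exact_mod_cast hnm
  obtain ⟨x₂, hx₂⟩ := exists_birkhoffSum_le_integral (hf i) hψ μ hμ n
  have hn0 : (0 : ℝ) < n := by exact_mod_cast (Nat.zero_le m).trans_lt hnm'
  have hopen : IsOpen {y | birkhoffSum (f i) ψ n y < n * c'} :=
    isOpen_lt (continuous_finsetSum _ fun j _ => hψ.comp ((hf i).iterate j)) continuous_const
  obtain ⟨r, hr, hball⟩ := Metric.isOpen_iff.1 hopen x₂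
    (hx₂.trans_lt (mul_lt_mul_of_pos_left hc' hn0))
  obtain ⟨p, hp, w, rfl, z, hz⟩ := hK (seqComp f ω N x) x₂ (min r (ε / 2))
    (by positivity) (min_le_right _ _)
  obtain ⟨⟨y, hy, rfl⟩, hz₂⟩ := hz (Metric.mem_ball_self (by positivity))
  obtain ⟨x', hx', rfl⟩ := hεU hy
  have hsum := hball (Metric.ball_subset_ball (min_le_left _ _) hz₂)
  set ω' : ℕ → Fin κ := fun j => if j < N then ω j else w.getD (j - N) i with hω'
  have hωN (j : ℕ) (h : j < N) : ω' j = ω j := by simp [hω', h]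
  have hωw : (fun j => ω' (N + j)) = fun j => w.getD j i := by ext j; simp [hω']
  have hωi : (fun j => ω' (N + w.length + j)) = fun _ => i := by
    ext j; simp [hω', add_assoc]
  refine ⟨(x', ω'), hUV ⟨hx', hN ω' hωN⟩, N + w.length + n, by omega, ?_⟩
  have htail (j : ℕ) : seqComp f ω' (N + w.length + j) x' =
      (f i)^[j] (wordComp f w (seqComp f ω N x')) := by
    rw [seqComp_add, hωi, seqComp_const, seqComp_add, hωw, seqComp_getD, seqComp_congr f hωN]
  have hsplit : seqBirkhoffSum f ψ (N + w.length + n) (x', ω') =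
      seqBirkhoffSum f ψ (N + w.length) (x', ω') +
        birkhoffSum (f i) ψ n (wordComp f w (seqComp f ω N x')) := by
    simp only [seqBirkhoffSum, birkhoffSum, Finset.sum_range_add, htail]
  have hhead := (le_abs_self _).trans (abs_seqBirkhoffSum_le f hB (N + w.length) (x', ω'))
  have hB0 : 0 ≤ B := (abs_nonneg _).trans (hB x)
  have hpK : ((N + w.length : ℕ) : ℝ) ≤ N + K := by exact_mod_cast Nat.add_le_add_left hp N
  have h1 : ((N + w.length : ℕ) : ℝ) * (B + |c|) ≤ (N + K) * (B + |c|) := by gcongr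
  have h2 : -(((N + w.length : ℕ) : ℝ) * |c|) ≤ ((N + w.length : ℕ) : ℝ) * c := by
    rw [← mul_neg]
    exact mul_le_mul_of_nonneg_left (neg_abs_le c) (Nat.cast_nonneg _)
  simp only [Set.mem_ofPred_eq] at hsum
  rw [hsplit, Nat.cast_add _ n]
  linarith

/-- **Existence of Birkhoff non-typical points for semigroup actions.**
Let `f₁, …, f_κ` be bi-Lipschitz homeomorphisms of a compact metric space `X` generating a
semigroup action with frequent hitting times, and let `ψ` be continuous and not a coboundary
with respect to some generator. Then there exist a point `x ∈ X` and an infinite word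
`ω ∈ Σ_κ = {1,…,κ}^ℕ` along which the Birkhoff averages of `ψ` oscillate:
their liminf is strictly smaller than their limsup. In particular the set of Birkhoff
non-typical points of the semigroup action is non-empty. -/
theorem exists_irregular_point_semigroup {X : Type*} [MetricSpace X] [CompactSpace X]
    [MeasurableSpace X] [BorelSpace X] (κ : ℕ) (hκ : 1 ≤ κ)
    (f : Fin κ → X ≃ X)
    (hLip : ∀ i, ∃ L : NNReal, LipschitzWith L (f i))
    (hLipInv : ∀ i, ∃ L : NNReal, LipschitzWith L (f i).symm)
    (ψ : X → ℝ) (hψ : Continuous ψ)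
    (hfht : FrequentHittingTimes (fun i => (f i : X → X)))
    (hcob : ∃ i, NotCoboundary (f i : X → X) ψ) :
    ∃ x : X, ∃ ω : ℕ → Fin κ,
      liminf (fun n : ℕ => (n : ℝ)⁻¹ *
          ∑ j ∈ Finset.range n, ψ (seqComp (fun i => (f i : X → X)) ω j x)) atTop <
      limsup (fun n : ℕ => (n : ℝ)⁻¹ *
          ∑ j ∈ Finset.range n, ψ (seqComp (fun i => (f i : X → X)) ω j x)) atTop := by
  obtain ⟨i, μ₁, μ₂, _, _, hμ₁, hμ₂, hlt⟩ := hcob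
  set F : Fin κ → X → X := fun i => (f i : X → X)
  have hFc (i : Fin κ) : Continuous (F i) := (hLip i).choose_spec.continuous
  have hFo (i : Fin κ) : IsOpenMap (F i) :=
    Homeomorph.isOpenMap ⟨f i, hFc i, (hLipInv i).choose_spec.continuous⟩
  obtain ⟨c₁, hc₁, hc₁'⟩ := exists_between hlt
  obtain ⟨c₂, hc₁₂, hc₂⟩ := exists_between hc₁'
  have hopen {φ : X → ℝ} (hφ : Continuous φ) (c : ℝ) (m : ℕ) :
      IsOpen {q : X × (ℕ → Fin κ) | ∃ n > m, seqBirkhoffSum F φ n q < n * c} := by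
    have : {q : X × (ℕ → Fin κ) | ∃ n > m, seqBirkhoffSum F φ n q < n * c} =
        ⋃ n > m, {q | seqBirkhoffSum F φ n q < n * c} := by ext; simp
    rw [this]
    exact isOpen_biUnion fun n _ =>
      isOpen_lt (continuous_seqBirkhoffSum hFc hφ n) continuous_const
  have hdense₁ := dense_iInter_of_isOpen_nat (hopen hψ c₁)
    (dense_seqBirkhoffSum_lt hFc hFo hfht hψ i μ₁ hμ₁ hc₁)
  have hdense₂ := dense_iInter_of_isOpen_nat (hopen hψ.neg (-c₂))
    (dense_seqBirkhoffSum_lt hFc hFo hfht hψ.neg i μ₂ hμ₂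
      (by simpa [integral_neg] using hc₂))
  have hX : Nonempty X := nonempty_of_isProbabilityMeasure μ₁
  have hword : Nonempty (ℕ → Fin κ) := ⟨fun _ => i⟩
  obtain ⟨⟨x, ω⟩, hq₁, hq₂⟩ :=
    (hdense₁.inter_of_Gδ (.iInter_of_isOpen (hopen hψ c₁))
      (.iInter_of_isOpen (hopen hψ.neg (-c₂))) hdense₂).nonempty
  simp only [Set.mem_iInter, Set.mem_ofPred_eq] at hq₁ hq₂
  obtain ⟨B, hB⟩ := isCompact_univ.exists_bound_of_continuousOn hψ.continuousOn
  have hbound (n : ℕ) : |(n : ℝ)⁻¹ * seqBirkhoffSum F ψ n (x, ω)| ≤ B := by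
    rcases n.eq_zero_or_pos with rfl | hn
    · simpa using (norm_nonneg _).trans (hB x trivial)
    · have hn' : (0 : ℝ) < n := by exact_mod_cast hn
      rw [abs_mul, abs_of_pos (inv_pos.2 hn'), inv_mul_le_iff₀ hn']
      exact abs_seqBirkhoffSum_le F (fun x => hB x trivial) n (x, ω)
  refine ⟨x, ω, ?_⟩
  change liminf (fun n : ℕ => (n : ℝ)⁻¹ * seqBirkhoffSum F ψ n (x, ω)) atTop <
    limsup (fun n : ℕ => (n : ℝ)⁻¹ * seqBirkhoffSum F ψ n (x, ω)) atTop
  refine (?_ : _ ≤ c₁).trans_lt (hc₁₂.trans_le ?_)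
  · refine liminf_le_of_frequently_le (frequently_atTop.2 fun m => ?_)
      (isBoundedUnder_of ⟨-B, fun n => (abs_le.1 (hbound n)).1⟩)
    obtain ⟨n, hn, h⟩ := hq₁ m
    have hn' : (0 : ℝ) < n := by exact_mod_cast (Nat.zero_le m).trans_lt hn
    exact ⟨n, hn.le, (inv_mul_le_iff₀ hn').2 h.le⟩
  · refine le_limsup_of_frequently_le (frequently_atTop.2 fun m => ?_)
      (isBoundedUnder_of ⟨B, fun n => (abs_le.1 (hbound n)).2⟩)
    obtain ⟨n, hn, h⟩ := hq₂ m
    have hn' : (0 : ℝ) < n := by exact_mod_cast (Nat.zero_le m).trans_lt hn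
    refine ⟨n, hn.le, (le_inv_mul_iff₀ hn').2 ?_⟩
    simp only [seqBirkhoffSum, Pi.neg_apply, Finset.sum_neg_distrib, mul_neg, neg_lt_neg_iff] at h
    exact h.le

end
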